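/- Let n ≥ 1 and let x ∈ ℝⁿ be such that the n+1 real numbers x₁, x₂, …, xₙ, 0 are pairwise distinct. Then there is exactly one maximal chain ∅ ⊊ S₁ ⊊ ⋯ ⊊ Sₙ ⊊ [n+1] of nonempty proper subsets of [n+1] such that x lies in the cone of nonnegative real combinations of u_{S₁},…,u_{Sₙ}. -/

import Mathlib

/-!
In homogeneous coordinates, that is, in `ℝ^(n+1)` modulo constant vectors, `u_S` is the indicator
function of `S`. A nonnegative combination of the indicators of a chain is a function `y` that
takes larger values on each member of the chain than off it, so, when the values of `y` are
distinct, the `p`-th member has to consist of the indices of the `p` largest values of `y`.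
Conversely, sorting the values of `y` decreasingly as `y₀ ≥ ⋯ ≥ yₙ`, the gaps `yₚ - yₚ₊₁` are
coefficients that exhibit `y`, up to the constant `yₙ`, as such a combination.
-/

/-- The standard basis vector `e_s` of `ℤⁿ` for `s ∈ [n+1]`, with the convention
that the vector corresponding to the last element `n+1` is zero. -/
def permEps (n : ℕ) (s : Fin (n + 1)) : Fin n → ℤ :=
  fun i => if (i : ℕ) = (s : ℕ) then 1 else 0

/-- The ray generator `u_S` of the permutohedral fan, for `∅ ⊊ S ⊊ [n+1]`. -/
def permU (n : ℕ) (S : Finset (Fin (n + 1))) : Fin n → ℤ :=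
  if Fin.last n ∈ S then -∑ s ∈ Sᶜ, permEps n s else ∑ s ∈ S, permEps n s

/-- The extension `x̃` of `x ∈ ℝⁿ` to `[n+1]` coordinates: `x̃ₛ = xₛ` for
`1 ≤ s ≤ n` and `x̃_{n+1} = 0`. -/
def tild (n : ℕ) (x : Fin n → ℝ) (s : Fin (n + 1)) : ℝ :=
  if h : (s : ℕ) < n then x ⟨(s : ℕ), h⟩ else 0

open Finset Function

section ProperChain

variable {α : Type*} {n : ℕ}

/-- A strictly increasing sequence of `n` nonempty proper subsets of `α`. It is a maximal chain of
such subsets when `α` has `n + 1` elements. The `p`-th set `S p` corresponds to `S_{p+1}` in the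
paper's numbering. -/
def IsProperChain [Fintype α] (S : Fin n → Finset α) : Prop :=
  (∀ p, (S p).Nonempty) ∧ (∀ p, S p ≠ univ) ∧ ∀ p q, p < q → S p ⊂ S q

lemma IsProperChain.strictMono [Fintype α] {S : Fin n → Finset α} (hS : IsProperChain S) :
    StrictMono S :=
  hS.2.2

lemma IsProperChain.card_eq [Fintype α] {S : Fin n → Finset α} (hS : IsProperChain S)
    (hα : Fintype.card α = n + 1) (p : Fin n) : #(S p) = p + 1 := by
  have card_pos (q) : 0 < #(S q) := (hS.1 q).card_pos
  have card_lt (q) : #(S q) < n + 1 := hα ▸ (card_lt_iff_ne_univ _).2 (hS.2.1 q)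
  let f (q : Fin n) : Fin n := ⟨#(S q) - 1, by have := card_pos q; have := card_lt q; omega⟩
  have f_strictMono : StrictMono f := fun q r hqr ↦
    Nat.sub_lt_sub_right (card_pos q) (card_lt_card (hS.strictMono hqr))
  have card_sub_one : #(S p) - 1 = p := congrArg Fin.val (congrFun f_strictMono.eq_id p)
  have := card_pos p
  omega

/-- The chain whose `p`-th member consists of the first `p + 1` elements of the enumeration `σ`. -/
def prefixChain (σ : Fin (n + 1) ≃ α) (p : Fin n) : Finset α :=
  (Iic p.castSucc).map σ.toEmbedding

lemma mem_prefixChain {σ : Fin (n + 1) ≃ α} {p : Fin n} {s : α} :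
    s ∈ prefixChain σ p ↔ σ.symm s ≤ p.castSucc := by
  rw [prefixChain, mem_map_equiv, mem_Iic]

lemma isProperChain_prefixChain [Fintype α] (σ : Fin (n + 1) ≃ α) :
    IsProperChain (prefixChain σ) := by
  refine ⟨fun p ↦ nonempty_Iic.map, fun p h ↦ ?_, fun p q hpq ↦ ?_⟩
  · have last_mem : σ (Fin.last n) ∈ prefixChain σ p := h ▸ mem_univ _
    rw [mem_prefixChain, Equiv.symm_apply_apply] at last_mem
    exact last_mem.not_gt p.castSucc_lt_last
  · exact map_ssubset_map.2 (Iic_ssubset_Iic.2 (Fin.castSucc_lt_castSucc_iff.2 hpq))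

end ProperChain

section Superlevel

variable {α G : Type*}

/-- `S` is a set of largest values of `y`: no value outside `S` exceeds a value on `S`. -/
def IsSuperlevel [LE G] (y : α → G) (S : Finset α) : Prop :=
  ∀ s ∈ S, ∀ t ∉ S, y t ≤ y s

lemma IsSuperlevel.eq_of_card_eq [PartialOrder G] {y : α → G} (hy : Injective y) {S T : Finset α}
    (hS : IsSuperlevel y S) (hT : IsSuperlevel y T) (hcard : #S = #T) : S = T := by
  by_contra hne
  obtain ⟨s, hsS, hsT⟩ := not_subset.1 fun h ↦ hne (eq_of_subset_of_card_le h hcard.ge)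
  obtain ⟨t, htT, htS⟩ := not_subset.1 fun h ↦ hne (eq_of_subset_of_card_le h hcard.le).symm
  have hst : s = t := hy ((hT t htT s hsT).antisymm (hS s hsS t htS))
  exact hsT (hst ▸ htT)

end Superlevel

section IndicatorCone

variable {ι α G : Type*} [Fintype ι] [DecidableEq α]

/-- `y` is, up to an additive constant, a combination of the indicator functions of the sets `S p`
with nonnegative coefficients. This is membership in the cone over `S` in homogeneous
coordinates. -/
def MemIndicatorCone [AddCommMonoid G] [LE G] (S : ι → Finset α) (y : α → G) : Prop :=
  ∃ a : ι → G, (∀ p, 0 ≤ a p) ∧ ∃ c, ∀ s, y s = c + ∑ p with s ∈ S p, a p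

lemma MemIndicatorCone.isSuperlevel [AddCommMonoid G] [PartialOrder G] [IsOrderedAddMonoid G]
    [LinearOrder ι] {S : ι → Finset α} {y : α → G} (hy : MemIndicatorCone S y) (hS : Monotone S)
    (p : ι) : IsSuperlevel y (S p) := by
  obtain ⟨a, ha, c, hc⟩ := hy
  intro s hs t ht
  have mem_of_mem (q) (htq : t ∈ S q) : s ∈ S q :=
    have hpq : p ≤ q := le_of_not_ge fun hqp ↦ ht (hS hqp htq)
    hS hpq hs
  rw [hc, hc]
  gcongr with q
  · exact fun _ _ _ ↦ ha _
  · exact mem_of_mem q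

end IndicatorCone

section Sorting

variable {α G : Type*} {n : ℕ}

lemma exists_equiv_antitone_comp [Fintype α] [LinearOrder G] (hα : Fintype.card α = n)
    (y : α → G) : ∃ σ : Fin n ≃ α, Antitone (y ∘ σ) :=
  let e : Fin n ≃ α := (Fintype.equivFinOfCardEq hα).symm
  ⟨(Tuple.sort (OrderDual.toDual ∘ y ∘ e)).trans e,
    Tuple.monotone_sort (OrderDual.toDual ∘ y ∘ e)⟩

lemma sum_castSucc_sub_succ_of_le [AddCommGroup G] (z : Fin (n + 1) → G) (k : Fin (n + 1)) :
    ∑ p : Fin n with k ≤ p.castSucc, (z p.castSucc - z p.succ) = z k - z (Fin.last n) := by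
  induction k using Fin.reverseInduction with
  | last => simp [Fin.last_le_iff, (Fin.castSucc_lt_last _).ne]
  | cast k ih =>
    have filter_succ : ({p | k.succ ≤ p.castSucc} : Finset (Fin n)) = Ioi k := by
      ext p; simp [Fin.succ_le_castSucc_iff]
    have filter_castSucc : ({p | k.castSucc ≤ p.castSucc} : Finset (Fin n)) = Ici k := by
      ext p; simp
    rw [filter_castSucc, ← add_sum_Ioi_eq_sum_Ici, ← filter_succ, ih, sub_add_sub_cancel]

lemma memIndicatorCone_prefixChain [DecidableEq α] [AddCommGroup G] [PartialOrder G]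
    [IsOrderedAddMonoid G] {y : α → G} {σ : Fin (n + 1) ≃ α} (hσ : Antitone (y ∘ σ)) :
    MemIndicatorCone (prefixChain σ) y := by
  refine ⟨fun p ↦ y (σ p.castSucc) - y (σ p.succ),
    fun p ↦ sub_nonneg.2 (hσ Fin.castSucc_lt_succ.le), y (σ (Fin.last n)), fun s ↦ ?_⟩
  have gaps_sum := sum_castSucc_sub_succ_of_le (y ∘ σ) (σ.symm s)
  simp only [comp_apply, Equiv.apply_symm_apply] at gaps_sum
  simp only [mem_prefixChain, gaps_sum, add_sub_cancel]

theorem existsUnique_isProperChain_memIndicatorCone [DecidableEq α] [Fintype α] [AddCommGroup G]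
    [LinearOrder G] [IsOrderedAddMonoid G] (hα : Fintype.card α = n + 1) {y : α → G}
    (hy : Injective y) :
    ∃! S : Fin n → Finset α, IsProperChain S ∧ MemIndicatorCone S y := by
  obtain ⟨σ, hσ⟩ := exists_equiv_antitone_comp hα y
  have hchain := isProperChain_prefixChain σ
  have hcone := memIndicatorCone_prefixChain hσ
  refine ⟨prefixChain σ, ⟨hchain, hcone⟩, fun T ⟨hT, hyT⟩ ↦ funext fun p ↦ ?_⟩
  refine IsSuperlevel.eq_of_card_eq hy (hyT.isSuperlevel hT.strictMono.monotone p)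
    (hcone.isSuperlevel hchain.strictMono.monotone p) ?_
  rw [hT.card_eq hα, hchain.card_eq hα]

end Sorting

section Permutohedral

variable {n : ℕ} {G : Type*}

lemma sum_permEps_apply (T : Finset (Fin (n + 1))) (i : Fin n) :
    ∑ s ∈ T, permEps n s i = if i.castSucc ∈ T then 1 else 0 := by
  have permEps_apply (s) : permEps n s i = if i.castSucc = s then 1 else 0 := by
    simp [permEps, Fin.ext_iff]
  simp [permEps_apply]

lemma permU_apply (S : Finset (Fin (n + 1))) (i : Fin n) :
    permU n S i = (if i.castSucc ∈ S then 1 else 0) - (if Fin.last n ∈ S then 1 else 0) := by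
  by_cases hlast : Fin.last n ∈ S <;> by_cases hi : i.castSucc ∈ S <;>
    simp [permU, hlast, hi, sum_permEps_apply]

lemma sum_permU_smul [AddCommGroup G] {ι : Type*} [Fintype ι] (S : ι → Finset (Fin (n + 1)))
    (a : ι → G) (i : Fin n) :
    ∑ p, permU n (S p) i • a p =
      ∑ p with i.castSucc ∈ S p, a p - ∑ p with Fin.last n ∈ S p, a p := by
  simp [permU_apply, sub_smul, ite_smul, sum_filter]

lemma memIndicatorCone_snoc_zero_iff [AddCommGroup G] [LE G] {ι : Type*} [Fintype ι]
    {S : ι → Finset (Fin (n + 1))} {x : Fin n → G} :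
    MemIndicatorCone S (Fin.snoc x 0 : Fin (n + 1) → G) ↔
      ∃ a : ι → G, (∀ p, 0 ≤ a p) ∧ ∀ i, x i = ∑ p, permU n (S p) i • a p := by
  refine exists_congr fun a ↦ and_congr_right fun _ ↦ ?_
  simp only [sum_permU_smul, Fin.forall_fin_succ', Fin.snoc_castSucc, Fin.snoc_last]
  constructor
  · rintro ⟨c, hx, hc⟩ i
    rw [hx, eq_neg_of_add_eq_zero_left hc.symm, neg_add_eq_sub]
  · exact fun hx ↦ ⟨-∑ p with Fin.last n ∈ S p, a p,
      fun i ↦ by rw [hx, neg_add_eq_sub], (neg_add_cancel _).symm⟩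

lemma tild_eq_snoc (x : Fin n → ℝ) : tild n x = Fin.snoc x 0 := by
  ext s
  cases s using Fin.lastCases <;> simp [tild]

end Permutohedral

theorem existsUnique_chain_of_pairwise_distinct_general {G : Type*} [AddCommGroup G]
    [LinearOrder G] [IsOrderedAddMonoid G] {n : ℕ} {x : Fin n → G}
    (hx : Injective (Fin.snoc x 0 : Fin (n + 1) → G)) :
    ∃! S : Fin n → Finset (Fin (n + 1)),
      IsProperChain S ∧
      ∃ a : Fin n → G, (∀ p, 0 ≤ a p) ∧ ∀ i, x i = ∑ p, permU n (S p) i • a p := by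
  simpa only [memIndicatorCone_snoc_zero_iff] using
    existsUnique_isProperChain_memIndicatorCone (Fintype.card_fin _) hx

/-- If the `n+1` numbers `x₁, …, xₙ, 0` are pairwise distinct, then there is exactly
one maximal chain `∅ ⊊ S₁ ⊊ ⋯ ⊊ Sₙ ⊊ [n+1]` of nonempty proper subsets of `[n+1]`
such that `x` lies in the cone of nonnegative combinations of `u_{S₁},…,u_{Sₙ}`. -/
theorem existsUnique_chain_of_pairwise_distinct (n : ℕ) (hn : 1 ≤ n) (x : Fin n → ℝ)
    (hx : ∀ i j : Fin (n + 1), i ≠ j → tild n x i ≠ tild n x j) :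
    ∃! S : Fin n → Finset (Fin (n + 1)),
      ((∀ p, (S p).Nonempty) ∧ (∀ p, S p ≠ Finset.univ) ∧
        (∀ p q, p < q → S p ⊂ S q)) ∧
      ∃ a : Fin n → ℝ, (∀ p, 0 ≤ a p) ∧
        ∀ i, x i = ∑ p, a p * (permU n (S p) i : ℝ) := by
  have hinj := tild_eq_snoc x ▸ injective_iff_pairwise_ne.2 hx
  simpa only [IsProperChain, zsmul_eq_mul, mul_comm] using
    existsUnique_chain_of_pairwise_distinct_general hinj
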